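/- There exist Laurent polynomials p₀, p₁ ∈ ℂ[t^{±1}, M^{±1}] such that A₁(t,M)·p₀ + B₁(t,M)·p₁ = C₁(t,M); equivalently, C₁ lies in the ideal of ℂ[t^{±1}, M^{±1}] generated by A₁ and B₁. -/

import Mathlib

/-!
Put `q = t²`, `x = M²`, `d = q² − q⁻²`. Since `a₁(t, t²M) = a₋₁` and `a₋₁(t, t⁻²M) = a₁`, the
equation is `a₁` times
`−a₁ a₋₁ p₀ + a₀ a₋₁ p₁ = −a₁(t, t⁻²M) a₋₁ + a₀ a₀(t, t²M) − a₁ a₋₁(t, t²M)`.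
The identity `a₁ a₋₁ = x² + x⁻² − q² − q⁻²` gives `a₀ = x² − x⁻² − (x − x⁻¹) a₁ a₋₁`, whence
`a₀ ≡ d` modulo `a₁`, while `a₀ ≡ −d` and `a₀(t, t²M) ≡ d` modulo `a₋₁`. As also
`a₁ a₋₁(t, t²M) = a₋₁² − d²`, the right-hand side is divisible by `a₋₁`. Modulo `a₁`, both `a₋₁` and
`a₁(t, t⁻²M)` are multiples of `d`, and so is the quotient; replacing `d` by `a₀` modulo `a₁` puts
the quotient in the ideal `(a₁, a₀)`. Keeping track of the cofactors yields explicit `p₀`, `p₁`.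
-/

noncomputable section

/-- The Laurent polynomial ring `ℂ[t^{±1}, M^{±1}]`, realized as the group algebra of `ℤ × ℤ`
over `ℂ`.  The element `mon a b` below is the monomial `t^a * M^b`. -/
abbrev R2 : Type := AddMonoidAlgebra ℂ (ℤ × ℤ)

instance : IsDomain R2 := NoZeroDivisors.to_isDomain _

/-- The monomial `t^a * M^b` in `ℂ[t^{±1}, M^{±1}]`. -/
def mon (a b : ℤ) : R2 := AddMonoidAlgebra.single (a, b) (1 : ℂ)
/-- The exponent map corresponding to the substitution `(t, M) ↦ (t, t²M)`. -/
def eU : (ℤ × ℤ) ≃+ (ℤ × ℤ) where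
  toFun p := (p.1 + 2 * p.2, p.2)
  invFun p := (p.1 - 2 * p.2, p.2)
  left_inv p := by ext <;> simp
  right_inv p := by ext <;> simp
  map_add' p q := by ext <;> simp <;> ring

/-- The exponent map corresponding to the substitution `(t, M) ↦ (t, t⁻²M)`. -/
def eD : (ℤ × ℤ) ≃+ (ℤ × ℤ) where
  toFun p := (p.1 - 2 * p.2, p.2)
  invFun p := (p.1 + 2 * p.2, p.2)
  left_inv p := by ext <;> simp
  right_inv p := by ext <;> simp
  map_add' p q := by ext <;> simp <;> ring

/-- The exponent map corresponding to the substitution `(t, M) ↦ (t, M⁻¹)`. -/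
def eI : (ℤ × ℤ) ≃+ (ℤ × ℤ) where
  toFun p := (p.1, -p.2)
  invFun p := (p.1, -p.2)
  left_inv p := by ext <;> simp
  right_inv p := by ext <;> simp
  map_add' p q := by ext <;> simp <;> ring

/-- The substitution automorphism `F(t, M) ↦ F(t, t²M)` of `ℂ[t^{±1}, M^{±1}]`. -/
def sU : R2 ≃ₐ[ℂ] R2 := AddMonoidAlgebra.domCongr ℂ ℂ eU

/-- The substitution automorphism `F(t, M) ↦ F(t, t⁻²M)` of `ℂ[t^{±1}, M^{±1}]`. -/
def sD : R2 ≃ₐ[ℂ] R2 := AddMonoidAlgebra.domCongr ℂ ℂ eD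

/-- The substitution automorphism `F(t, M) ↦ F(t, M⁻¹)` of `ℂ[t^{±1}, M^{±1}]`. -/
def sI : R2 ≃ₐ[ℂ] R2 := AddMonoidAlgebra.domCongr ℂ ℂ eI
/-- `a₁(t,M) = t⁻²M² − t²M⁻²`. -/
def a1 : R2 := mon (-2) 2 - mon 2 (-2)

/-- `a₋₁(t,M) = t²M² − t⁻²M⁻²`. -/
def am1 : R2 := mon 2 2 - mon (-2) (-2)

/-- `a₀(t,M) = (M² − M⁻²)(−M⁴ − M⁻⁴ + M² + M⁻² + t⁴ + t⁻⁴)`. -/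
def a0 : R2 :=
  (mon 0 2 - mon 0 (-2)) *
    (-(mon 0 4) - mon 0 (-4) + mon 0 2 + mon 0 (-2) + mon 4 0 + mon (-4) 0)

/-- `A₁(t,M) = −a₁(t,M)·a₁(t,t²M)·a₋₁(t,t⁻²M)`. -/
def A1 : R2 := -(a1 * sU a1 * sD am1)

/-- `B₁(t,M) = a₀(t,M)·a₁(t,t²M)·a₋₁(t,t⁻²M)`. -/
def B1 : R2 := a0 * sU a1 * sD am1

/-- `C₁(t,M) = −a₁(t,M)·a₁(t,t⁻²M)·a₁(t,t²M) + a₀(t,M)·a₀(t,t²M)·a₋₁(t,t⁻²M)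
    − a₁(t,M)·a₋₁(t,t⁻²M)·a₋₁(t,t²M)`. -/
def C1 : R2 := -(a1 * sD a1 * sU a1) + a0 * sU a0 * sD am1 - a1 * sD am1 * sU am1

/-- The formal core: the cofactors `e, f, g, w, r, v` of the congruences described above
determine a solution. Here `am2, b, s` stand for `a₋₁(t, t²M)`, `a₁(t, t⁻²M)`, `a₀(t, t²M)`. -/
theorem solvable_of_cofactors {S : Type*} [CommRing S]
    {a am am2 b z s d e f g w r v : S}
    (hz : z = -d + am * e) (hs : s = d + am * f) (hm : a * am2 = am ^ 2 - d ^ 2)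
    (hza : z = d + a * g) (ham : am = w * d + r * a) (hb : b = -(w * d) + v * a) :
    ∃ p0 p1 : S, -(a * am * a) * p0 + z * am * a * p1 =
      -(a * b * am) + z * s * a - a * a * am2 := by
  refine ⟨g * (e - f + w * (e * f)) - (r * (e * f - 1) - v), e - f + w * (e * f), ?_⟩
  have hzs : z * s - a * am2 = am * (d * (e - f) + am * (e * f - 1)) := by
    rw [hm, hz, hs]; ring
  have hD : d * (e - f) + am * (e * f - 1) - b
      = d * (e - f + w * (e * f)) + a * (r * (e * f - 1) - v) := by
    linear_combination (e * f - 1) * ham - hb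
  linear_combination -a * hzs - a * am * hD + am * a * (e - f + w * (e * f)) * hza

theorem mon_mul (a b c d : ℤ) : mon a b * mon c d = mon (a + c) (b + d) := by
  simp [mon, AddMonoidAlgebra.single_mul_single]

theorem sU_mon (a b : ℤ) : sU (mon a b) = mon (a + 2 * b) b := by
  simp [sU, mon, eU]

theorem sD_mon (a b : ℤ) : sD (mon a b) = mon (a - 2 * b) b := by
  simp [sD, mon, eD]

/-- There exist Laurent polynomials `p₀, p₁ ∈ ℂ[t^{±1}, M^{±1}]` with `A₁p₀ + B₁p₁ = C₁`;
equivalently, `C₁` lies in the ideal generated by `A₁` and `B₁`. -/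
theorem diophantine_solvable : ∃ p0 p1 : R2, A1 * p0 + B1 * p1 = C1 := by
  have hA : sU a1 = am1 := by simp [a1, am1, sU_mon]
  have hM : sD am1 = a1 := by simp [a1, am1, sD_mon]
  unfold A1 B1 C1
  rw [hA, hM]
  -- `mon (2 * i) (2 * j)` is `q^i * x^j`; the cofactors come from factoring `x² − q^{±2}` and
  -- `x⁻² − q^{±2}` through `a₁` and `a₋₁`.
  apply solvable_of_cofactors
    (d := mon 4 0 - mon (-4) 0)
    (e := mon (-2) 2 + mon 2 (-2) - (mon 0 2 - mon 0 (-2)) * a1)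
    (f := mon 6 2 + mon (-6) (-2) - (mon 4 2 - mon (-4) (-2)) * sU am1)
    (g := mon 2 2 + mon (-2) (-2) - (mon 0 2 - mon 0 (-2)) * am1)
    (w := mon (-2) 2) (r := mon (-4) 0) (v := mon 4 0)
  all_goals
    simp only [a0, a1, am1, map_sub, map_add, map_neg, sU_mon, sD_mon, pow_two,
      mul_add, mul_sub, sub_mul, mul_neg, mon_mul]
    norm_num
    try abel
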